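/- arXiv:2210.13789 — 2 statements merged into one kernel-verified Lean document; each statement's English description precedes it below -/
import Mathlib

section
/- Let (S, μ) and (T, ν) be σ-finite measure spaces and let 1 < p < ∞. Let f₁, g₁ ∈ L^p(S, μ; ℝ) and f₂, g₂ ∈ L^p(T, ν; ℝ), and let F, G ∈ L^p(S × T, μ × ν; ℝ) be the elements satisfying F(s,t) = f₁(s)·f₂(t) and G(s,t) = g₁(s)·g₂(t) for (μ × ν)-almost every (s,t). Then F ⊥_BJ G in L^p(S × T, μ × ν) if and only if f₁ ⊥_BJ g₁ in L^p(S, μ) or f₂ ⊥_BJ g₂ in L^p(T, ν). -/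
open MeasureTheory
open scoped ENNReal

/-!
For `1 < p < ∞` the function `α ↦ ‖f + α • g‖ ^ p` is convex and differentiable, so `f ⊥_BJ g`,
which says that it is minimal at `0`, means that its derivative `p * ∫ ‖f‖ ^ (p - 2) * ⟪f, g⟫` at
`0` vanishes. By Fubini, the integral attached to a pair of elementary tensors is the product of the
integrals attached to the two factors.
-/

theorem isMinOn_univ_iff_hasDerivAt_eq_zero {φ : ℝ → ℝ} {φ' a : ℝ} (hφ : ConvexOn ℝ Set.univ φ)
    (hφ' : HasDerivAt φ φ' a) : IsMinOn φ Set.univ a ↔ φ' = 0 := by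
  refine ⟨fun hmin ↦ (hmin.isLocalMin Filter.univ_mem).hasDerivAt_eq_zero hφ', ?_⟩
  rintro rfl
  exact hφ.isMinOn_of_rightDeriv_eq_zero (by simp)
    (hφ'.hasDerivWithinAt.derivWithin (uniqueDiffWithinAt_Ioi a))

section BirkhoffJames

variable {E : Type*} [SeminormedAddCommGroup E] [NormedSpace ℝ E] {u v : E} {q : ℝ}

/-- Birkhoff–James orthogonality `u ⊥_BJ v` in a real (semi)normed space: no point of the line
through `u` in the direction `v` has smaller norm than `u`. -/
def IsBirkhoffJamesOrthogonal (u v : E) : Prop :=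
  ∀ α : ℝ, ‖u + α • v‖ ≥ ‖u‖

theorem isBirkhoffJamesOrthogonal_iff_isMinOn_rpow (hq : 0 < q) :
    IsBirkhoffJamesOrthogonal u v ↔ IsMinOn (fun α : ℝ ↦ ‖u + α • v‖ ^ q) Set.univ 0 := by
  simp only [IsBirkhoffJamesOrthogonal, ge_iff_le, isMinOn_univ_iff, zero_smul, add_zero,
    Real.rpow_le_rpow_iff (norm_nonneg _) (norm_nonneg _) hq]

theorem convexOn_norm_rpow (hq : 1 ≤ q) : ConvexOn ℝ Set.univ fun x : E ↦ ‖x‖ ^ q := by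
  refine ⟨convex_univ, fun x _ y _ a b ha hb hab ↦ ?_⟩
  calc ‖a • x + b • y‖ ^ q ≤ (a • ‖x‖ + b • ‖y‖) ^ q := by
        gcongr
        exact convexOn_univ_norm.2 (Set.mem_univ x) (Set.mem_univ y) ha hb hab
    _ ≤ a • ‖x‖ ^ q + b • ‖y‖ ^ q :=
        (convexOn_rpow hq).2 (norm_nonneg x) (norm_nonneg y) ha hb hab

theorem convexOn_norm_add_smul_rpow (hq : 1 ≤ q) (u v : E) :
    ConvexOn ℝ Set.univ fun α : ℝ ↦ ‖u + α • v‖ ^ q := by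
  simpa [AffineMap.lineMap_apply, add_comm, Function.comp_def] using
    (convexOn_norm_rpow hq).comp_affineMap (AffineMap.lineMap (k := ℝ) u (u + v))

theorem isBirkhoffJamesOrthogonal_iff_of_hasDerivAt {d : ℝ} (hq : 1 ≤ q)
    (hd : HasDerivAt (fun α : ℝ ↦ ‖u + α • v‖ ^ q) d 0) :
    IsBirkhoffJamesOrthogonal u v ↔ d = 0 :=
  (isBirkhoffJamesOrthogonal_iff_isMinOn_rpow (zero_lt_one.trans_le hq)).trans
    (isMinOn_univ_iff_hasDerivAt_eq_zero (convexOn_norm_add_smul_rpow hq u v) hd)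

end BirkhoffJames

section DualityPairing

open scoped RealInnerProductSpace

variable {E : Type*} [NormedAddCommGroup E] [InnerProductSpace ℝ E] {q : ℝ}

/-- The pairing of `y` with the image `‖x‖ ^ (q - 2) • x` of `x` under the duality map with gauge
`t ↦ t ^ (q - 1)`; it is `1 / q` times the derivative of `‖·‖ ^ q` at `x` in the direction `y`.
At `x = 0` it vanishes for every `q`, whatever the value of `0 ^ (q - 2)`. -/
noncomputable def dualityPairing (q : ℝ) (x y : E) : ℝ :=
  ‖x‖ ^ (q - 2) * ⟪x, y⟫

theorem hasDerivAt_norm_add_smul_rpow (hq : 1 < q) (x y : E) (t : ℝ) :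
    HasDerivAt (fun t : ℝ ↦ ‖x + t • y‖ ^ q) (q * dualityPairing q (x + t • y) y) t := by
  have hline : HasDerivAt (fun t : ℝ ↦ x + t • y) y t := by
    simpa using ((hasDerivAt_id t).smul_const y).const_add x
  refine ((hasFDerivAt_norm_rpow (x + t • y) hq).comp_hasDerivAt t hline).congr_deriv ?_
  simp only [dualityPairing, FunLike.coe_smul, Pi.smul_apply, innerSL_apply_apply, smul_eq_mul,
    mul_assoc]

theorem abs_dualityPairing_le (q : ℝ) (x y : E) :
    |dualityPairing q x y| ≤ ‖x‖ ^ (q - 1) * ‖y‖ := by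
  rcases eq_or_ne x 0 with rfl | hx
  · simpa [dualityPairing] using by positivity
  · calc |dualityPairing q x y| = ‖x‖ ^ (q - 2) * |⟪x, y⟫| := by
          rw [dualityPairing, abs_mul, abs_of_nonneg (by positivity)]
      _ ≤ ‖x‖ ^ (q - 2) * (‖x‖ * ‖y‖) := by
          gcongr
          exact abs_real_inner_le_norm x y
      _ = ‖x‖ ^ (q - 1) * ‖y‖ := by
          rw [← mul_assoc, ← Real.rpow_add_one (norm_ne_zero_iff.mpr hx)]
          ring_nf

theorem abs_dualityPairing_add_smul_le (hq : 1 ≤ q) (x y : E) {t : ℝ} (ht : |t| ≤ 1) :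
    |dualityPairing q (x + t • y) y| ≤ (‖x‖ + ‖y‖) ^ q := by
  have hnorm : ‖x + t • y‖ ≤ ‖x‖ + ‖y‖ := by
    refine (norm_add_le _ _).trans ?_
    rw [norm_smul]
    gcongr
    exact mul_le_of_le_one_left (norm_nonneg y) ht
  calc |dualityPairing q (x + t • y) y| ≤ ‖x + t • y‖ ^ (q - 1) * ‖y‖ :=
        abs_dualityPairing_le q _ y
    _ ≤ (‖x‖ + ‖y‖) ^ (q - 1) * (‖x‖ + ‖y‖) := by
        gcongr
        exact le_add_of_nonneg_left (norm_nonneg x)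
    _ = (‖x‖ + ‖y‖) ^ q := by
        rw [← Real.rpow_add_one' (by positivity) (by linarith), sub_add_cancel]

theorem dualityPairing_smul_smul (q a b : ℝ) (x y : E) :
    dualityPairing q (a • x) (b • y) = dualityPairing q a b * dualityPairing q x y := by
  simp only [dualityPairing, norm_smul, Real.mul_rpow (norm_nonneg _) (norm_nonneg _),
    real_inner_smul_left, real_inner_smul_right, Real.inner_apply]
  ring

end DualityPairing

section Lp

variable {S E : Type*} [MeasurableSpace S] [NormedAddCommGroup E] {μ : Measure S} {p : ℝ≥0∞}

theorem norm_Lp_rpow_toReal_eq_integral (hp₀ : p ≠ 0) (hp : p ≠ ⊤) (f : Lp E p μ) :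
    ‖f‖ ^ p.toReal = ∫ s, ‖f s‖ ^ p.toReal ∂μ := by
  have hmeas := Lp.aestronglyMeasurable f
  rw [Lp.norm_def, toReal_eLpNorm hmeas, lpNorm_eq_integral_norm_rpow_toReal hp₀ hp hmeas,
    Real.rpow_inv_rpow (integral_nonneg fun s ↦ by positivity)
      (ENNReal.toReal_pos hp₀ hp).ne']

theorem integrable_norm_add_norm_rpow {f g : S → E} (hp₀ : p ≠ 0) (hp : p ≠ ⊤)
    (hf : MemLp f p μ) (hg : MemLp g p μ) :
    Integrable (fun s ↦ (‖f s‖ + ‖g s‖) ^ p.toReal) μ := by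
  simpa only [Pi.add_apply, Real.norm_of_nonneg (add_nonneg (norm_nonneg _) (norm_nonneg _))]
    using (hf.norm.add hg.norm).integrable_norm_rpow hp₀ hp

variable [InnerProductSpace ℝ E]

theorem aestronglyMeasurable_dualityPairing (q : ℝ) {f g : S → E}
    (hf : AEStronglyMeasurable f μ) (hg : AEStronglyMeasurable g μ) :
    AEStronglyMeasurable (fun s ↦ dualityPairing q (f s) (g s)) μ :=
  (hf.norm.aemeasurable.pow_const (q - 2)).aestronglyMeasurable.mul (hf.inner hg)

theorem hasDerivAt_integral_norm_add_smul_rpow {f g : S → E} (hp1 : 1 < p) (hp : p ≠ ⊤)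
    (hf : MemLp f p μ) (hg : MemLp g p μ) :
    HasDerivAt (fun α : ℝ ↦ ∫ s, ‖f s + α • g s‖ ^ p.toReal ∂μ)
      (p.toReal * ∫ s, dualityPairing p.toReal (f s) (g s) ∂μ) 0 := by
  have hp₀ : p ≠ 0 := (zero_lt_one.trans hp1).ne'
  have hq : 1 < p.toReal := by simpa using ENNReal.toReal_strict_mono hp hp1
  set q := p.toReal
  have hmeas (α : ℝ) : AEStronglyMeasurable (fun s ↦ f s + α • g s) μ :=
    hf.aestronglyMeasurable.add (hg.aestronglyMeasurable.const_smul α)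
  have hdominated : ∀ᵐ s ∂μ, ∀ α ∈ Metric.ball (0 : ℝ) 1,
      ‖q * dualityPairing q (f s + α • g s) (g s)‖ ≤ q * (‖f s‖ + ‖g s‖) ^ q := by
    refine .of_forall fun s α hα ↦ ?_
    rw [norm_mul, Real.norm_of_nonneg (by positivity)]
    gcongr
    exact abs_dualityPairing_add_smul_le hq.le _ _ (mem_ball_zero_iff.mp hα).le
  have hderiv := (hasDerivAt_integral_of_dominated_loc_of_deriv_le
    (Metric.ball_mem_nhds (0 : ℝ) one_pos)
    (.of_forall fun α ↦ ((hmeas α).norm.aemeasurable.pow_const q).aestronglyMeasurable)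
    (by simpa only [zero_smul, add_zero] using hf.integrable_norm_rpow hp₀ hp)
    ((aestronglyMeasurable_dualityPairing q (hmeas 0) hg.aestronglyMeasurable).const_mul q)
    hdominated
    ((integrable_norm_add_norm_rpow hp₀ hp hf hg).const_mul q)
    (.of_forall fun s α _ ↦ hasDerivAt_norm_add_smul_rpow hq (f s) (g s) α)).2
  simpa only [zero_smul, add_zero, integral_const_mul] using hderiv

theorem hasDerivAt_norm_Lp_add_smul_rpow (hp1 : 1 < p) (hp : p ≠ ⊤) (f g : Lp E p μ) :
    HasDerivAt (fun α : ℝ ↦ ‖f + α • g‖ ^ p.toReal)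
      (p.toReal * ∫ s, dualityPairing p.toReal (f s) (g s) ∂μ) 0 := by
  convert hasDerivAt_integral_norm_add_smul_rpow hp1 hp (Lp.memLp f) (Lp.memLp g) with α
  rw [norm_Lp_rpow_toReal_eq_integral (zero_lt_one.trans hp1).ne' hp]
  refine integral_congr_ae ?_
  filter_upwards [Lp.coeFn_add f (α • g), Lp.coeFn_smul α g] with s hadd hsmul
  rw [hadd, Pi.add_apply, hsmul, Pi.smul_apply]

theorem isBirkhoffJamesOrthogonal_Lp_iff [Fact (1 ≤ p)] (hp1 : p ≠ 1) (hp : p ≠ ⊤)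
    (f g : Lp E p μ) : IsBirkhoffJamesOrthogonal f g ↔
      ∫ s, dualityPairing p.toReal (f s) (g s) ∂μ = 0 := by
  have hlt : 1 < p := (Fact.out : 1 ≤ p).lt_of_ne' hp1
  have hq : 1 < p.toReal := by simpa using ENNReal.toReal_strict_mono hp hlt
  rw [isBirkhoffJamesOrthogonal_iff_of_hasDerivAt hq.le
    (hasDerivAt_norm_Lp_add_smul_rpow hlt hp f g), mul_eq_zero_iff_left (by positivity)]

end Lp

theorem stmt8_general {S T E : Type*} [MeasurableSpace S] [MeasurableSpace T]
    [NormedAddCommGroup E] [InnerProductSpace ℝ E]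
    {μ : Measure S} {ν : Measure T} [SFinite μ] [SFinite ν]
    {p : ℝ≥0∞} [Fact (1 ≤ p)] (hp1 : p ≠ 1) (hp2 : p ≠ ⊤)
    {f₁ g₁ : Lp ℝ p μ} {f₂ g₂ : Lp E p ν} {F G : Lp E p (μ.prod ν)}
    (hF : ∀ᵐ z ∂(μ.prod ν), F z = f₁ z.1 • f₂ z.2)
    (hG : ∀ᵐ z ∂(μ.prod ν), G z = g₁ z.1 • g₂ z.2) :
    IsBirkhoffJamesOrthogonal F G ↔
      IsBirkhoffJamesOrthogonal f₁ g₁ ∨ IsBirkhoffJamesOrthogonal f₂ g₂ := by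
  have hfactor : ∫ z, dualityPairing p.toReal (F z) (G z) ∂(μ.prod ν) =
      (∫ s, dualityPairing p.toReal (f₁ s) (g₁ s) ∂μ) *
        ∫ t, dualityPairing p.toReal (f₂ t) (g₂ t) ∂ν := by
    rw [← integral_prod_mul]
    refine integral_congr_ae ?_
    filter_upwards [hF, hG] with z hFz hGz
    rw [hFz, hGz, dualityPairing_smul_smul]
  simp only [isBirkhoffJamesOrthogonal_Lp_iff hp1 hp2, hfactor, mul_eq_zero]

/-- For σ-finite measure spaces `(S, μ)`, `(T, ν)` and `1 < p < ∞`, if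
`F, G ∈ L^p(S × T, μ × ν; ℝ)` are given a.e. by `F(s,t) = f₁ s * f₂ t` and
`G(s,t) = g₁ s * g₂ t`, then `F ⊥_BJ G` in `L^p(μ × ν)` if and only if `f₁ ⊥_BJ g₁` in
`L^p(μ)` or `f₂ ⊥_BJ g₂` in `L^p(ν)`. -/
theorem stmt8
    {S T : Type*} [MeasurableSpace S] [MeasurableSpace T]
    (μ : Measure S) (ν : Measure T) [SigmaFinite μ] [SigmaFinite ν]
    (p : ℝ≥0∞) (hp1 : 1 < p) (hp2 : p ≠ ⊤)
    (f₁ g₁ : Lp ℝ p μ) (f₂ g₂ : Lp ℝ p ν)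
    (F G : Lp ℝ p (μ.prod ν))
    (hF : ∀ᵐ z ∂(μ.prod ν), F z = f₁ z.1 * f₂ z.2)
    (hG : ∀ᵐ z ∂(μ.prod ν), G z = g₁ z.1 * g₂ z.2) :
    (∀ α : ℝ, ‖F + α • G‖ ≥ ‖F‖) ↔
      (∀ α : ℝ, ‖f₁ + α • g₁‖ ≥ ‖f₁‖) ∨ (∀ α : ℝ, ‖f₂ + α • g₂‖ ≥ ‖f₂‖) := by
  have : Fact (1 ≤ p) := ⟨hp1.le⟩
  exact stmt8_general hp1.ne' hp2 hF hG
end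

section
/- Let K₁ and K₂ be nonempty compact Hausdorff topological spaces and let f₁, f₂ ∈ C(K₁, ℂ) and g₁, g₂ ∈ C(K₂, ℂ). If the function F₁(s,t) = f₁(s)·g₁(t) is strongly Birkhoff-James orthogonal in C(K₁ × K₂, ℂ) to F₂(s,t) = f₂(s)·g₂(t) — meaning ‖F₁ + F₂·h‖_∞ ≥ ‖F₁‖_∞ for every h ∈ C(K₁ × K₂, ℂ) — then f₁ ⊥_BJ f₂ in C(K₁, ℂ) or g₁ ⊥_BJ g₂ in C(K₂, ℂ) (ordinary Birkhoff-James orthogonality). -/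
/-!
If `f ≠ 0` is strongly orthogonal to `g` in `C(X, 𝕜)`, then testing against
`h = -f * conj g / (1 + |g| ^ 2)`, for which `f + g * h = f / (1 + |g| ^ 2)`, yields a point where
`|f|` is maximal and `g` vanishes; conversely such a point witnesses strong orthogonality.
For nonzero `f₁` and `g₁`, `|f₁ ⊗ g₁|` is maximal at `(s, t)` exactly when `|f₁|` is maximal at `s`
and `|g₁|` is maximal at `t`, while `f₂ ⊗ g₂` vanishes at `(s, t)` exactly when `f₂ s = 0` or
`g₂ t = 0`, so strong orthogonality passes to one of the two factors.
-/

/-- Birkhoff-James orthogonality `u ⊥_BJ v` in a normed space over `𝕜`. -/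
def BirkhoffJamesOrthogonal (𝕜 : Type*) {E : Type*} [Norm E] [Add E] [SMul 𝕜 E] (u v : E) : Prop :=
  ∀ α : 𝕜, ‖u‖ ≤ ‖u + α • v‖

/-- Strong Birkhoff-James orthogonality in a normed algebra: the scalars of Birkhoff-James
orthogonality are replaced by elements of the algebra, multiplying on the right. -/
def StronglyBirkhoffJamesOrthogonal {A : Type*} [Norm A] [Add A] [Mul A] (a b : A) : Prop :=
  ∀ c : A, ‖a‖ ≤ ‖a + b * c‖

theorem StronglyBirkhoffJamesOrthogonal.birkhoffJamesOrthogonal (𝕜 : Type*) {A : Type*}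
    [CommSemiring 𝕜] [Norm A] [Semiring A] [Algebra 𝕜 A] {a b : A}
    (h : StronglyBirkhoffJamesOrthogonal a b) : BirkhoffJamesOrthogonal 𝕜 a b := fun α ↦ by
  simpa only [Algebra.smul_def, Algebra.commutes] using h (algebraMap 𝕜 A α)

theorem stronglyBirkhoffJamesOrthogonal_zero_left {A : Type*} [SeminormedAddGroup A] [Mul A]
    (b : A) : StronglyBirkhoffJamesOrthogonal 0 b := fun c ↦ by
  simp only [norm_zero, norm_nonneg]

theorem eq_zero_or_exists_norm_apply_eq_norm {X E : Type*} [TopologicalSpace X] [CompactSpace X]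
    [NormedAddCommGroup E] (f : C(X, E)) : f = 0 ∨ ∃ x, ‖f x‖ = ‖f‖ := by
  cases isEmpty_or_nonempty X with
  | inl _ => exact Or.inl (Subsingleton.elim f 0)
  | inr _ =>
    obtain ⟨x, -, isMaxOn_x⟩ := isCompact_univ.exists_isMaxOn Set.univ_nonempty
      (map_continuous f).norm.continuousOn
    refine Or.inr ⟨x, le_antisymm (f.norm_coe_le_norm x) ?_⟩
    exact (f.norm_le (norm_nonneg _)).2 fun y ↦ isMaxOn_x (Set.mem_univ y)

section StrongOrthogonality

variable {X 𝕜 : Type*} [TopologicalSpace X] [RCLike 𝕜]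

theorem exists_norm_add_mul_apply_eq_div (f g : C(X, 𝕜)) :
    ∃ h : C(X, 𝕜), ∀ x, ‖(f + g * h) x‖ = ‖f x‖ / (1 + ‖g x‖ ^ 2) := by
  have denom_ne_zero (x : X) : (1 + (‖g x‖ : 𝕜) ^ 2) ≠ 0 := by
    exact_mod_cast (by positivity : (1 + ‖g x‖ ^ 2 : ℝ) ≠ 0)
  refine ⟨⟨fun x ↦ -(f x * star (g x)) / (1 + (‖g x‖ : 𝕜) ^ 2),
    by fun_prop (disch := assumption)⟩, fun x ↦ ?_⟩
  have damped : f x + g x * (-(f x * star (g x)) / (1 + (‖g x‖ : 𝕜) ^ 2)) =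
      f x / ((1 + ‖g x‖ ^ 2 : ℝ) : 𝕜) := by
    have mul_star_self : g x * star (g x) = (‖g x‖ : 𝕜) ^ 2 := RCLike.mul_conj (g x)
    push_cast
    field_simp [denom_ne_zero x]
    linear_combination -f x * mul_star_self
  simp only [ContinuousMap.add_apply, ContinuousMap.mul_apply, ContinuousMap.coe_mk, damped,
    norm_div, RCLike.norm_ofReal, abs_of_pos (by positivity : 0 < 1 + ‖g x‖ ^ 2)]

variable [CompactSpace X]

theorem stronglyBirkhoffJamesOrthogonal_of_norm_apply_eq {f g : C(X, 𝕜)} {x : X}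
    (norm_apply : ‖f x‖ = ‖f‖) (apply_eq_zero : g x = 0) :
    StronglyBirkhoffJamesOrthogonal f g := fun h ↦
  calc ‖f‖ = ‖(f + g * h) x‖ := by simp [norm_apply, apply_eq_zero]
    _ ≤ ‖f + g * h‖ := (f + g * h).norm_coe_le_norm x

theorem StronglyBirkhoffJamesOrthogonal.exists_norm_apply_eq {f g : C(X, 𝕜)}
    (hfg : StronglyBirkhoffJamesOrthogonal f g) (hf : f ≠ 0) : ∃ x, ‖f x‖ = ‖f‖ ∧ g x = 0 := by
  have norm_pos : 0 < ‖f‖ := norm_pos_iff.2 hf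
  obtain ⟨h, norm_apply⟩ := exists_norm_add_mul_apply_eq_div f g
  obtain sum_eq_zero | ⟨x, attained⟩ := eq_zero_or_exists_norm_apply_eq_norm (f + g * h)
  · exact absurd (hfg h) (by simpa [sum_eq_zero] using hf)
  have norm_mul_le : ‖f‖ * (1 + ‖g x‖ ^ 2) ≤ ‖f x‖ := by
    rw [← le_div_iff₀ (by positivity), ← norm_apply, attained]
    exact hfg h
  have apply_le : ‖f x‖ ≤ ‖f‖ := f.norm_coe_le_norm x
  have one_add_sq_eq : 1 + ‖g x‖ ^ 2 = 1 := by
    refine le_antisymm (le_of_mul_le_mul_left ?_ norm_pos) (le_add_of_nonneg_right (sq_nonneg _))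
    simpa only [mul_one] using norm_mul_le.trans apply_le
  exact ⟨x, le_antisymm apply_le (by simpa only [one_add_sq_eq, mul_one] using norm_mul_le),
    by simpa using one_add_sq_eq⟩

theorem stronglyBirkhoffJamesOrthogonal_iff {f g : C(X, 𝕜)} :
    StronglyBirkhoffJamesOrthogonal f g ↔ f = 0 ∨ ∃ x, ‖f x‖ = ‖f‖ ∧ g x = 0 := by
  constructor
  · exact fun hfg ↦ or_iff_not_imp_left.2 hfg.exists_norm_apply_eq
  · rintro (rfl | ⟨x, norm_apply, apply_eq_zero⟩)
    · exact stronglyBirkhoffJamesOrthogonal_zero_left g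
    · exact stronglyBirkhoffJamesOrthogonal_of_norm_apply_eq norm_apply apply_eq_zero

end StrongOrthogonality

section ElementaryTensor

variable {X Y R : Type*} [TopologicalSpace X] [TopologicalSpace Y]

/-- The elementary tensor `f ⊗ g`, realised as the function `(s, t) ↦ f s * g t` under the
identification of `C(X) ⊗ C(Y)` with a subalgebra of `C(X × Y)`. -/
def elementaryTensor [TopologicalSpace R] [Mul R] [ContinuousMul R] (f : C(X, R)) (g : C(Y, R)) :
    C(X × Y, R) :=
  f.comp ContinuousMap.fst * g.comp ContinuousMap.snd

theorem elementaryTensor_apply [TopologicalSpace R] [Mul R] [ContinuousMul R]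
    (f : C(X, R)) (g : C(Y, R)) (s : X) (t : Y) : elementaryTensor f g (s, t) = f s * g t :=
  rfl

variable [CompactSpace X] [CompactSpace Y] [NonUnitalNormedRing R] [NormMulClass R]

theorem norm_elementaryTensor (f : C(X, R)) (g : C(Y, R)) :
    ‖elementaryTensor f g‖ = ‖f‖ * ‖g‖ := by
  apply le_antisymm
  · refine (ContinuousMap.norm_le _ (by positivity)).2 fun ⟨s, t⟩ ↦ ?_
    rw [elementaryTensor_apply, norm_mul]
    gcongr
    exacts [f.norm_coe_le_norm s, g.norm_coe_le_norm t]
  · obtain rfl | ⟨s, norm_f⟩ := eq_zero_or_exists_norm_apply_eq_norm f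
    · simp
    obtain rfl | ⟨t, norm_g⟩ := eq_zero_or_exists_norm_apply_eq_norm g
    · simp
    rw [← norm_f, ← norm_g, ← norm_mul, ← elementaryTensor_apply]
    exact (elementaryTensor f g).norm_coe_le_norm (s, t)

theorem elementaryTensor_eq_zero_iff {f : C(X, R)} {g : C(Y, R)} :
    elementaryTensor f g = 0 ↔ f = 0 ∨ g = 0 := by
  rw [← norm_eq_zero, norm_elementaryTensor, mul_eq_zero, norm_eq_zero, norm_eq_zero]

theorem norm_elementaryTensor_apply_eq_iff {f : C(X, R)} {g : C(Y, R)} (hf : f ≠ 0) (hg : g ≠ 0)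
    {s : X} {t : Y} :
    ‖elementaryTensor f g (s, t)‖ = ‖elementaryTensor f g‖ ↔ ‖f s‖ = ‖f‖ ∧ ‖g t‖ = ‖g‖ := by
  rw [elementaryTensor_apply, norm_mul, norm_elementaryTensor]
  refine ⟨fun h ↦ ?_, fun ⟨norm_f, norm_g⟩ ↦ by rw [norm_f, norm_g]⟩
  have norm_f_pos : 0 < ‖f‖ := norm_pos_iff.2 hf
  have norm_g_pos : 0 < ‖g‖ := norm_pos_iff.2 hg
  have norm_apply_g_pos : 0 < ‖g t‖ :=
    pos_of_mul_pos_right (h ▸ mul_pos norm_f_pos norm_g_pos) (norm_nonneg (f s))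
  exact (mul_eq_mul_iff_eq_and_eq_of_pos' (f.norm_coe_le_norm s) (g.norm_coe_le_norm t)
    norm_f_pos norm_apply_g_pos).1 h

end ElementaryTensor

theorem stmt11_general {X Y 𝕜 : Type*} [TopologicalSpace X] [CompactSpace X]
    [TopologicalSpace Y] [CompactSpace Y] [RCLike 𝕜] (f₁ f₂ : C(X, 𝕜)) (g₁ g₂ : C(Y, 𝕜)) :
    StronglyBirkhoffJamesOrthogonal (elementaryTensor f₁ g₁) (elementaryTensor f₂ g₂) ↔
      StronglyBirkhoffJamesOrthogonal f₁ f₂ ∨ StronglyBirkhoffJamesOrthogonal g₁ g₂ := by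
  simp only [stronglyBirkhoffJamesOrthogonal_iff, elementaryTensor_eq_zero_iff]
  by_cases hf : f₁ = 0
  · simp only [hf, true_or]
  by_cases hg : g₁ = 0
  · simp only [hg, true_or, or_true]
  obtain ⟨s₀, norm_f⟩ := (eq_zero_or_exists_norm_apply_eq_norm f₁).resolve_left hf
  obtain ⟨t₀, norm_g⟩ := (eq_zero_or_exists_norm_apply_eq_norm g₁).resolve_left hg
  simp only [Prod.exists, norm_elementaryTensor_apply_eq_iff hf hg, elementaryTensor_apply,
    mul_eq_zero, hf, hg, false_or]
  constructor
  · rintro ⟨s, t, ⟨norm_fs, norm_gt⟩, fs_eq_zero | gt_eq_zero⟩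
    · exact Or.inl ⟨s, norm_fs, fs_eq_zero⟩
    · exact Or.inr ⟨t, norm_gt, gt_eq_zero⟩
  · rintro (⟨s, norm_fs, fs_eq_zero⟩ | ⟨t, norm_gt, gt_eq_zero⟩)
    · exact ⟨s, t₀, ⟨norm_fs, norm_g⟩, Or.inl fs_eq_zero⟩
    · exact ⟨s₀, t, ⟨norm_f, norm_gt⟩, Or.inr gt_eq_zero⟩

/-- For nonempty compact Hausdorff spaces `K₁, K₂` and
`f₁, f₂ ∈ C(K₁, ℂ)`, `g₁, g₂ ∈ C(K₂, ℂ)`, if the function `(s,t) ↦ f₁ s * g₁ t` is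
strongly Birkhoff-James orthogonal to `(s,t) ↦ f₂ s * g₂ t` in the C*-algebra
`C(K₁ × K₂, ℂ)`, then `f₁ ⊥_BJ f₂` in `C(K₁, ℂ)` or `g₁ ⊥_BJ g₂` in `C(K₂, ℂ)`
(ordinary Birkhoff-James orthogonality). -/
theorem stmt11
    {K₁ K₂ : Type*} [TopologicalSpace K₁] [CompactSpace K₁] [T2Space K₁] [Nonempty K₁]
    [TopologicalSpace K₂] [CompactSpace K₂] [T2Space K₂] [Nonempty K₂]
    (f₁ f₂ : C(K₁, ℂ)) (g₁ g₂ : C(K₂, ℂ))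
    (hs : ∀ h : C(K₁ × K₂, ℂ),
      ‖(f₁.comp ContinuousMap.fst * g₁.comp ContinuousMap.snd) +
          (f₂.comp ContinuousMap.fst * g₂.comp ContinuousMap.snd) * h‖ ≥
        ‖f₁.comp ContinuousMap.fst * g₁.comp ContinuousMap.snd‖) :
    (∀ α : ℂ, ‖f₁ + α • f₂‖ ≥ ‖f₁‖) ∨ (∀ α : ℂ, ‖g₁ + α • g₂‖ ≥ ‖g₁‖) := by
  exact ((stmt11_general f₁ f₂ g₁ g₂).1 hs).imp
    (·.birkhoffJamesOrthogonal ℂ) (·.birkhoffJamesOrthogonal ℂ)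
end
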